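/- Let K ⊂ ℝ² be a nondegenerate triangle with vertices A, B, C (i.e., A, B, C are affinely independent), let e be the closed segment from A to B, let |e| denote its length and |K| the (two-dimensional Lebesgue) area of K. Then for every natural number p and every real polynomial q in two variables of total degree at most p, the squared L2 norm of q over the edge e (with respect to one-dimensional arclength measure) satisfies ∫_e q² ds ≤ ((p+1)(p+2)/2) · (|e|/|K|) · ∫_K q² dA. -/

import Mathlib

open MeasureTheory

/-!
On a line from a point of the edge to the opposite vertex, `q` is a polynomial in one variable, and
in Duffy coordinates the area element carries the weight `1 - y` along that line. So it suffices to
bound `r(0)²` by a weighted square integral of `r` on `[0, 1]`, and the best constant there is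
`K(0)`, where `K` is the polynomial representing evaluation at `0`. A Rodrigues formula gives `K`
explicitly: integrating by parts `p + 1` times kills every `r` of degree at most `p` except for one
boundary term at `0`. Integrating over the edge proves the estimate for a reference cone, and
averages are invariant under affine equivalences.
-/

namespace TraceInverse

open Module
open scoped Pointwise

section Polynomial

open Polynomial

theorem eval_zero_iterate_derivative_X_pow_mul {R : Type*} [CommSemiring R] (n m : ℕ) (f : R[X]) :
    (derivative^[m + n] (X ^ n * f)).eval 0 = (m + n).factorial * f.coeff m := by
  rw [← coeff_zero_eq_eval_zero, coeff_iterate_derivative, zero_add, Nat.descFactorial_self,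
    coeff_X_pow_mul, nsmul_eq_mul]

theorem coeff_one_one_sub_X_pow {R : Type*} [CommRing R] (n : ℕ) :
    ((1 - X : R[X]) ^ n).coeff 1 = -n := by
  have h := coeff_derivative ((1 - X : R[X]) ^ n) 0
  simpa [derivative_pow, coeff_zero_eq_eval_zero] using h.symm

theorem integral_derivative_mul (f g : ℝ[X]) (a b : ℝ) :
    ∫ x in a..b, (derivative f).eval x * g.eval x =
      f.eval b * g.eval b - f.eval a * g.eval a - ∫ x in a..b, f.eval x * (derivative g).eval x :=
  eq_sub_of_add_eq <| by
    have hf' := (derivative f).continuous.intervalIntegrable (μ := volume) a b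
    rw [← intervalIntegral.integral_deriv_mul_eq_sub (fun x _ => f.hasDerivAt x)
      (fun x _ => g.hasDerivAt x) hf' ((derivative g).continuous.intervalIntegrable _ _),
      intervalIntegral.integral_add] <;>
    exact Continuous.intervalIntegrable (by fun_prop) _ _

theorem eval_iterate_derivative_eq_zero_of_pow_dvd {R : Type*} [CommRing R] {f : R[X]} {a : R}
    {m n : ℕ} (hmn : m < n) (h : (X - C a) ^ n ∣ f) : (derivative^[m] f).eval a = 0 :=
  dvd_iff_isRoot.mp <| (dvd_pow_self _ (Nat.sub_ne_zero_of_lt hmn)).trans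
    (pow_sub_dvd_iterate_derivative_of_pow_dvd m h)

theorem integral_iterate_derivative_mul {f : ℝ[X]} {a b : ℝ} {n : ℕ} (ha : (X - C a) ^ n ∣ f)
    (hb : (X - C b) ^ n ∣ f) (g : ℝ[X]) :
    ∫ x in a..b, (derivative^[n] f).eval x * g.eval x =
      (-1) ^ n * ∫ x in a..b, f.eval x * (derivative^[n] g).eval x := by
  induction n generalizing g with
  | zero => simp
  | succ n ih =>
    rw [Function.iterate_succ_apply', integral_derivative_mul,
      eval_iterate_derivative_eq_zero_of_pow_dvd n.lt_succ_self ha,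
      eval_iterate_derivative_eq_zero_of_pow_dvd n.lt_succ_self hb,
      ih ((pow_dvd_pow _ n.le_succ).trans ha) ((pow_dvd_pow _ n.le_succ).trans hb),
      Function.iterate_succ_apply]
    ring

/-- The Rodrigues polynomial of the weight `(1 - x) ^ α` on `[0, 1]`: up to a nonzero scalar, it is
`(1 - x) ^ α` times the kernel that represents evaluation at `0` on polynomials of degree at
most `p`. -/
noncomputable def rodrigues (α p : ℕ) : ℝ[X] :=
  derivative^[p + 1] (X ^ p * (1 - X) ^ (p + 1 + α))

theorem integral_rodrigues_mul (α : ℕ) {p : ℕ} {r : ℝ[X]} (hr : r.natDegree ≤ p) :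
    ∫ x in (0 : ℝ)..1, (rodrigues α p).eval x * r.eval x = -(p.factorial * r.eval 0) := by
  set g : ℝ[X] := X ^ p * (1 - X) ^ (p + 1 + α) with hg
  have hg₀ : (X - C 0) ^ p ∣ g := by simp [hg]
  have hg₁ : (X - C 1) ^ (p + 1) ∣ g := by
    rw [hg, ← neg_sub X 1, neg_pow, C_1]
    exact (pow_dvd_pow _ (by lia)).trans ((dvd_mul_left _ _).mul_left _)
  have hr' : derivative^[p] (derivative r) = 0 := by
    rw [← Function.iterate_succ_apply]
    exact iterate_derivative_eq_zero (Nat.lt_succ_of_le hr)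
  have hg_zero : (derivative^[p] g).eval 0 = p.factorial := by
    have h := eval_zero_iterate_derivative_X_pow_mul p 0 ((1 - X : ℝ[X]) ^ (p + 1 + α))
    simpa [coeff_zero_eq_eval_zero] using h
  rw [rodrigues, ← hg, Function.iterate_succ_apply', integral_derivative_mul,
    integral_iterate_derivative_mul hg₀ ((pow_dvd_pow _ p.le_succ).trans hg₁), hr', hg_zero,
    eval_iterate_derivative_eq_zero_of_pow_dvd p.lt_succ_self hg₁]
  simp

theorem exists_rodrigues_eq_mul (α p : ℕ) :
    ∃ k : ℝ[X], rodrigues α p = (1 - X) ^ α * k ∧ k.natDegree ≤ p ∧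
      k.eval 0 = -((p + 1).factorial * (p + 1 + α)) := by
  have hdvd : (1 - X : ℝ[X]) ^ α ∣ rodrigues α p := by
    have h := pow_sub_dvd_iterate_derivative_of_pow_dvd (p + 1)
      (dvd_mul_left ((1 - X : ℝ[X]) ^ (p + 1 + α)) (X ^ p))
    rwa [Nat.add_sub_cancel_left] at h
  obtain ⟨k, hk⟩ := hdvd
  have hk_zero : k.eval 0 = -((p + 1).factorial * (p + 1 + α)) := by
    have h := eval_zero_iterate_derivative_X_pow_mul p 1 ((1 - X : ℝ[X]) ^ (p + 1 + α))
    rw [add_comm 1 p, ← rodrigues, hk, coeff_one_one_sub_X_pow] at h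
    simpa only [eval_mul, eval_pow, eval_sub, eval_one, eval_X, sub_zero, one_pow, one_mul,
      mul_neg, Nat.cast_add, Nat.cast_one] using h
  have hk_ne : k ≠ 0 := by
    rintro rfl
    simp only [eval_zero, zero_eq_neg] at hk_zero
    exact absurd hk_zero (by positivity)
  have hw_deg : (1 - X : ℝ[X]).natDegree = 1 := by compute_degree!
  have hw_ne : (1 - X : ℝ[X]) ≠ 0 := ne_zero_of_natDegree_gt (n := 0) (by lia)
  have hdeg : (rodrigues α p).natDegree ≤ p + (p + 1 + α) - (p + 1) :=
    (natDegree_iterate_derivative _ _).trans <| Nat.sub_le_sub_right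
      (natDegree_mul_le_of_le (natDegree_X_pow_le p)
        ((natDegree_pow_le_of_le _ hw_deg.le).trans_eq (mul_one _))) _
  rw [hk, natDegree_mul (pow_ne_zero α hw_ne) hk_ne, natDegree_pow, hw_deg] at hdeg
  exact ⟨k, hk, by lia, hk_zero⟩

theorem exists_reproducing_polynomial (α p : ℕ) :
    ∃ k : ℝ[X], k.natDegree ≤ p ∧ k.eval 0 = (p + 1) * (p + 1 + α) ∧
      ∀ r : ℝ[X], r.natDegree ≤ p →
        ∫ x in (0 : ℝ)..1, (1 - x) ^ α * (k.eval x * r.eval x) = r.eval 0 := by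
  obtain ⟨k, hk, hk_deg, hk_zero⟩ := exists_rodrigues_eq_mul α p
  have hfac : (p.factorial : ℝ) ≠ 0 := by positivity
  refine ⟨C (-(p.factorial : ℝ)⁻¹) * k, (natDegree_C_mul_le _ _).trans hk_deg, ?_,
    fun r hr => ?_⟩
  · rw [eval_mul, eval_C, hk_zero, Nat.factorial_succ]
    push_cast
    field_simp
  · have h := integral_rodrigues_mul α hr
    simp only [hk, eval_mul, eval_pow, eval_sub, eval_one, eval_X, mul_assoc] at h
    calc ∫ x in (0 : ℝ)..1, (1 - x) ^ α * ((C (-(p.factorial : ℝ)⁻¹) * k).eval x * r.eval x)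
        = ∫ x in (0 : ℝ)..1, -(p.factorial : ℝ)⁻¹ * ((1 - x) ^ α * (k.eval x * r.eval x)) := by
          simp only [eval_mul, eval_C]; congr! 2; ring
      _ = r.eval 0 := by
          rw [intervalIntegral.integral_const_mul, h]; field_simp

theorem sq_eval_zero_le_integral (α : ℕ) {p : ℕ} {r : ℝ[X]} (hr : r.natDegree ≤ p) :
    r.eval 0 ^ 2 ≤ (p + 1) * (p + 1 + α) * ∫ x in (0 : ℝ)..1, (1 - x) ^ α * r.eval x ^ 2 := by
  obtain ⟨k, hk_deg, hk_zero, hk⟩ := exists_reproducing_polynomial α p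
  set M : ℝ := (p + 1) * (p + 1 + α)
  have hM_pos : 0 < M := by positivity
  set I : ℝ := ∫ x in (0 : ℝ)..1, (1 - x) ^ α * r.eval x ^ 2
  have hexpand : ∫ x in (0 : ℝ)..1, (1 - x) ^ α * (M * r.eval x - r.eval 0 * k.eval x) ^ 2 =
      M * (M * I - r.eval 0 ^ 2) :=
    calc
      _ = ∫ x in (0 : ℝ)..1, (M ^ 2 * ((1 - x) ^ α * r.eval x ^ 2) -
            2 * M * r.eval 0 * ((1 - x) ^ α * (k.eval x * r.eval x)) +
            r.eval 0 ^ 2 * ((1 - x) ^ α * (k.eval x * k.eval x))) := by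
        congr! 2; ring
      _ = M ^ 2 * I - 2 * M * r.eval 0 * r.eval 0 + r.eval 0 ^ 2 * M := by
        rw [intervalIntegral.integral_add, intervalIntegral.integral_sub,
          intervalIntegral.integral_const_mul, intervalIntegral.integral_const_mul,
          intervalIntegral.integral_const_mul, hk r hr, hk k hk_deg, hk_zero]
        all_goals exact Continuous.intervalIntegrable (by fun_prop) _ _
      _ = M * (M * I - r.eval 0 ^ 2) := by ring
  have hnonneg : 0 ≤ M * (M * I - r.eval 0 ^ 2) := by
    rw [← hexpand]
    refine intervalIntegral.integral_nonneg zero_le_one fun x hx => ?_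
    exact mul_nonneg (pow_nonneg (sub_nonneg.mpr hx.2) α) (sq_nonneg _)
  exact sub_nonneg.mp (nonneg_of_mul_nonneg_right hnonneg hM_pos)

end Polynomial

section Line

variable {V W : Type*} [AddCommGroup V] [Module ℝ V] [AddCommGroup W] [Module ℝ W]

/-- `f` restricts to a polynomial of degree at most `p` in the affine parameter on the line
through `x` and `y`. -/
def HasDegreeLEOnLine (f : V → ℝ) (p : ℕ) (x y : V) : Prop :=
  ∃ r : Polynomial ℝ, r.natDegree ≤ p ∧ ∀ t : ℝ, f (AffineMap.lineMap x y t) = r.eval t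

theorem HasDegreeLEOnLine.comp_affineMap {f : V → ℝ} {p : ℕ} (φ : W →ᵃ[ℝ] V) {x y : W}
    (h : HasDegreeLEOnLine f p (φ x) (φ y)) : HasDegreeLEOnLine (f ∘ φ) p x y := by
  obtain ⟨r, hr_deg, hr⟩ := h
  exact ⟨r, hr_deg, fun t => by rw [Function.comp_apply, φ.apply_lineMap, hr]⟩

theorem hasDegreeLEOnLine_eval {σ : Type*} {q : MvPolynomial σ ℝ} {p : ℕ}
    (hq : q.totalDegree ≤ p) (x y : σ → ℝ) :
    HasDegreeLEOnLine (fun z => MvPolynomial.eval z q) p x y := by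
  let line : σ → Polynomial ℝ := fun i =>
    Polynomial.C (y i - x i) * Polynomial.X + Polynomial.C (x i)
  refine ⟨MvPolynomial.aeval line q, ?_, fun t => ?_⟩
  · simpa using MvPolynomial.aeval_natDegree_le (n := 1) q hq line
      fun _ => Polynomial.natDegree_linear_le
  · have hline : AffineMap.lineMap x y t = fun i => (line i).eval t := by
      ext i
      simp only [line, AffineMap.pi_lineMap_apply, AffineMap.lineMap_apply_ring',
        Polynomial.eval_add, Polynomial.eval_mul, Polynomial.eval_C, Polynomial.eval_X]
      ring
    have hC : (Polynomial.evalRingHom t).comp (algebraMap ℝ (Polynomial ℝ)) = RingHom.id ℝ := by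
      ext; simp
    rw [hline, ← Polynomial.coe_evalRingHom, MvPolynomial.map_aeval, hC]
    rfl

end Line

section Cone

variable {E : Type*} [AddCommGroup E] [Module ℝ E]

/-- The cone in `E × ℝ` over the base `F × {0}` with apex `(0, 1)`. -/
def cone (F : Set E) : Set (E × ℝ) := convexJoin ℝ (F ×ˢ {0}) {(0, 1)}

theorem lineMap_apex (x : E) (y : ℝ) :
    AffineMap.lineMap (x, (0 : ℝ)) ((0 : E), (1 : ℝ)) y = ((1 - y) • x, y) := by
  simp [AffineMap.lineMap_apply_module]

theorem cone_eq_image (F : Set E) :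
    cone F = (fun z : ℝ × E => ((1 - z.1) • z.2, z.1)) '' (Set.Icc 0 1 ×ˢ F) := by
  ext z
  simp only [cone, convexJoin_singleton_right, Set.mem_iUnion, segment_eq_image_lineMap,
    Set.mem_image, Prod.exists, Set.mem_prod, Set.mem_singleton_iff]
  constructor
  · rintro ⟨x, _, ⟨hx, rfl⟩, y, hy, rfl⟩
    exact ⟨y, x, ⟨hy, hx⟩, (lineMap_apex x y).symm⟩
  · rintro ⟨y, x, ⟨hy, hx⟩, rfl⟩
    exact ⟨x, 0, ⟨hx, rfl⟩, y, hy, lineMap_apex x y⟩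

theorem mk_mem_cone_iff {F : Set E} {x : E} {y : ℝ} :
    (x, y) ∈ cone F ↔ y ∈ Set.Icc 0 1 ∧ x ∈ (1 - y) • F := by
  rw [cone_eq_image]
  constructor
  · rintro ⟨⟨y, x⟩, ⟨hy, hx⟩, h⟩
    obtain ⟨rfl, rfl⟩ := Prod.mk.inj h
    exact ⟨hy, Set.smul_mem_smul_set hx⟩
  · rintro ⟨hy, x, hx, rfl⟩
    exact ⟨(y, x), ⟨hy, hx⟩, rfl⟩

theorem cone_Icc : cone (Set.Icc (0 : ℝ) 1) = convexHull ℝ {(0, 0), (1, 0), (0, 1)} := by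
  rw [cone, ← convexJoin_segment_singleton, ← segment_eq_Icc zero_le_one,
    ← Prod.image_mk_segment_left, Set.prod_singleton]

end Cone

section ConeIntegral

variable {E : Type*} [NormedAddCommGroup E] [NormedSpace ℝ E]

theorem isCompact_cone {F : Set E} (hF : IsCompact F) : IsCompact (cone F) := by
  rw [cone_eq_image]
  exact (isCompact_Icc.prod hF).image (by fun_prop)

variable [FiniteDimensional ℝ E] [MeasurableSpace E] [BorelSpace E] (μ : Measure E)
  [μ.IsAddHaarMeasure]

theorem setIntegral_cone {G : Type*} [NormedAddCommGroup G] [NormedSpace ℝ G] {F : Set E}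
    (hF : IsCompact F) {f : E × ℝ → G} (hf : IntegrableOn f (cone F) (μ.prod volume)) :
    ∫ z in cone F, f z ∂μ.prod volume =
      ∫ y in (0 : ℝ)..1, (1 - y) ^ finrank ℝ E • ∫ x in F, f ((1 - y) • x, y) ∂μ := by
  have hslice {y : ℝ} (hy : y ∈ Set.Ico (0 : ℝ) 1) : ∫ x, (cone F).indicator f (x, y) ∂μ =
      (1 - y) ^ finrank ℝ E • ∫ x in F, f ((1 - y) • x, y) ∂μ := by
    have hy_pos : 0 < 1 - y := sub_pos.mpr hy.2
    have hsection : (fun x => (cone F).indicator f (x, y)) =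
        ((1 - y) • F).indicator fun x => f (x, y) := by
      classical
      ext x
      simp [Set.indicator_apply, mk_mem_cone_iff, hy.1, hy.2.le]
    rw [hsection, integral_indicator (hF.smul (1 - y)).measurableSet,
      Measure.setIntegral_comp_smul_of_pos μ (fun x => f (x, y)) F hy_pos,
      smul_inv_smul₀ (by positivity)]
  have hslice_zero {y : ℝ} (hy : y ∉ Set.Icc (0 : ℝ) 1) :
      ∫ x, (cone F).indicator f (x, y) ∂μ = 0 := by
    simp [Set.indicator_of_notMem (fun h => hy (mk_mem_cone_iff.mp h).1)]
  have hcone := (isCompact_cone hF).measurableSet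
  rw [← integral_indicator hcone, integral_prod_symm _ (hf.integrable_indicator hcone),
    ← setIntegral_eq_integral_of_forall_compl_eq_zero fun y => hslice_zero,
    intervalIntegral.integral_of_le zero_le_one, integral_Icc_eq_integral_Ico,
    ← integral_Ico_eq_integral_Ioc]
  exact setIntegral_congr_fun measurableSet_Ico fun y => hslice

theorem measureReal_cone {F : Set E} (hF : IsCompact F) :
    (μ.prod volume).real (cone F) = μ.real F / (finrank ℝ E + 1) := by
  have h := setIntegral_cone μ hF
    (f := fun _ => (1 : ℝ)) (integrableOn_const (isCompact_cone hF).measure_ne_top)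
  simp only [setIntegral_const, smul_eq_mul, mul_one, intervalIntegral.integral_mul_const,
    intervalIntegral.integral_comp_sub_left (fun t : ℝ => t ^ finrank ℝ E), integral_pow] at h
  rw [h, sub_self, sub_zero, one_pow, zero_pow (Nat.succ_ne_zero _), sub_zero,
    one_div_mul_eq_div]

theorem setIntegral_cone_swap {F : Set E} (hF : IsCompact F) {f : E × ℝ → ℝ} (hf : Continuous f) :
    ∫ z in cone F, f z ∂μ.prod volume =
      ∫ x in F, (∫ y in (0 : ℝ)..1, (1 - y) ^ finrank ℝ E * f ((1 - y) • x, y)) ∂μ := by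
  have hint : Integrable (Function.uncurry fun (y : ℝ) (x : E) =>
      (1 - y) ^ finrank ℝ E * f ((1 - y) • x, y))
      ((volume.restrict (Set.uIoc 0 1)).prod (μ.restrict F)) := by
    rw [Measure.prod_restrict]
    have hcont : Continuous (Function.uncurry fun (y : ℝ) (x : E) =>
        (1 - y) ^ finrank ℝ E * f ((1 - y) • x, y)) := by fun_prop
    exact (hcont.continuousOn.integrableOn_compact (isCompact_uIcc.prod hF)).mono_set
      (Set.prod_mono_left Set.uIoc_subset_uIcc)
  rw [setIntegral_cone μ hF (hf.continuousOn.integrableOn_compact (isCompact_cone hF)),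
    ← intervalIntegral_integral_swap hint]
  simp only [smul_eq_mul, integral_const_mul]

theorem setAverage_base_sq_le_cone {F : Set E} (hF : IsCompact F) {f : E × ℝ → ℝ}
    (hf : Continuous f) {p : ℕ}
    (hp : ∀ x ∈ F, HasDegreeLEOnLine f p (x, 0) (0, 1)) :
    ⨍ x in F, f (x, 0) ^ 2 ∂μ ≤
      (p + 1) * (p + 1 + finrank ℝ E) / (finrank ℝ E + 1) *
        ⨍ z in cone F, f z ^ 2 ∂μ.prod volume := by
  set M : ℝ := (p + 1) * (p + 1 + finrank ℝ E)
  have hpointwise : ∀ x ∈ F, f (x, 0) ^ 2 ≤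
      M * ∫ y in (0 : ℝ)..1, (1 - y) ^ finrank ℝ E * f ((1 - y) • x, y) ^ 2 := by
    intro x hx
    obtain ⟨r, hr_deg, hr⟩ := hp x hx
    simp only [lineMap_apex] at hr
    have hr_zero : f (x, 0) = r.eval 0 := by simpa using hr 0
    simpa only [hr, hr_zero] using sq_eval_zero_le_integral (finrank ℝ E) hr_deg
  have hintegral : ∫ x in F, f (x, 0) ^ 2 ∂μ ≤ M * ∫ z in cone F, f z ^ 2 ∂μ.prod volume := by
    rw [setIntegral_cone_swap μ hF (f := fun z => f z ^ 2) (by fun_prop), ← integral_const_mul]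
    have hleft : Continuous fun x => f (x, 0) ^ 2 := by fun_prop
    have hright : Continuous fun x =>
        M * ∫ y in (0 : ℝ)..1, (1 - y) ^ finrank ℝ E * f ((1 - y) • x, y) ^ 2 :=
      continuous_const.mul <|
        intervalIntegral.continuous_parametric_intervalIntegral_of_continuous' (by fun_prop) 0 1
    exact setIntegral_mono_on (hleft.continuousOn.integrableOn_compact hF)
      (hright.continuousOn.integrableOn_compact hF) hF.measurableSet hpointwise
  calc ⨍ x in F, f (x, 0) ^ 2 ∂μ
      = (μ.real F)⁻¹ * ∫ x in F, f (x, 0) ^ 2 ∂μ := by rw [setAverage_eq, smul_eq_mul]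
    _ ≤ (μ.real F)⁻¹ * (M * ∫ z in cone F, f z ^ 2 ∂μ.prod volume) := by gcongr
    _ = M / (finrank ℝ E + 1) * ⨍ z in cone F, f z ^ 2 ∂μ.prod volume := by
      rw [setAverage_eq, smul_eq_mul, measureReal_cone μ hF]
      field_simp

end ConeIntegral

section Affine

variable {V W : Type*} [NormedAddCommGroup V] [NormedSpace ℝ V] [FiniteDimensional ℝ V]
  [MeasurableSpace V] [BorelSpace V] [NormedAddCommGroup W] [NormedSpace ℝ W]
  [FiniteDimensional ℝ W] [MeasurableSpace W] [BorelSpace W]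

theorem exists_measurePreserving_smul (μ : Measure V) [μ.IsAddHaarMeasure] (ν : Measure W)
    [ν.IsAddHaarMeasure] (e : W ≃ᵃ[ℝ] V) :
    ∃ c : NNReal, c ≠ 0 ∧ MeasurePreserving e ν (c • μ) := by
  let L : W ≃L[ℝ] V := e.linear.toContinuousLinearEquiv
  have he : (e : W → V) = (· + e 0) ∘ L := by
    ext z
    simpa [L] using e.map_vadd 0 z
  have hL : MeasurePreserving L ν (ν.map L) := L.continuous.measurable.measurePreserving ν
  have : (ν.map L).IsAddHaarMeasure := L.isAddHaarMeasure_map ν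
  refine ⟨(ν.map L).addHaarScalarFactor μ,
    (Measure.addHaarScalarFactor_pos_of_isAddHaarMeasure _ _).ne', ?_⟩
  rw [he, ← Measure.isAddLeftInvariant_eq_smul (ν.map L) μ]
  exact (measurePreserving_add_right (ν.map L) (e 0)).comp hL

theorem setAverage_image_affineEquiv {G : Type*} [NormedAddCommGroup G] [NormedSpace ℝ G]
    (μ : Measure V) [μ.IsAddHaarMeasure] (ν : Measure W)
    [ν.IsAddHaarMeasure] (e : W ≃ᵃ[ℝ] V) (s : Set W) (f : V → G) :
    ⨍ x in e '' s, f x ∂μ = ⨍ z in s, f (e z) ∂ν := by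
  obtain ⟨c, hc, he⟩ := exists_measurePreserving_smul μ ν e
  have hemb : MeasurableEmbedding e :=
    (AffineEquiv.toContinuousAffineEquiv e).toHomeomorph.measurableEmbedding
  have hvol : ν.real s = c * μ.real (e '' s) := by
    rw [← measureReal_nnreal_smul_apply, measureReal_def, measureReal_def,
      ← he.measure_preimage_emb hemb, Set.preimage_image_eq _ e.injective]
  rw [setAverage_eq, setAverage_eq, ← he.setIntegral_image_emb hemb, hvol, Measure.restrict_smul,
    integral_smul_nnreal_measure, NNReal.smul_def, smul_smul]
  congr 1
  field_simp

end Affine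

section Triangle

theorem exists_affineEquiv_of_affineIndependent {k V : Type*} [Field k] [AddCommGroup V]
    [Module k V] {A B C : V} (h : AffineIndependent k ![A, B, C]) (hV : finrank k V = 2) :
    ∃ e : (k × k) ≃ᵃ[k] V, e (0, 0) = A ∧ e (1, 0) = B ∧ e (0, 1) = C := by
  have hli : LinearIndependent k ![B - A, C - A] := by
    rwa [affineIndependent_iff_linearIndependent_vsub k _ 0,
      ← linearIndependent_equiv' (finSuccAboveEquiv 0) (g := ![B - A, C - A])
        (by ext i; fin_cases i <;> rfl)] at h
  let b := basisOfLinearIndependentOfCardEqFinrank hli (by simp [hV])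
  refine ⟨((LinearEquiv.finTwoArrow k k).symm.trans b.equivFun.symm).toAffineEquiv.trans
    (AffineEquiv.vaddConst k A), ?_, ?_, ?_⟩ <;> simp [b, Basis.equivFun_symm_apply]

theorem integral_segment_sq_le_setAverage {V : Type*} [NormedAddCommGroup V] [NormedSpace ℝ V]
    [MeasurableSpace V] [BorelSpace V] (μ : Measure V) [μ.IsAddHaarMeasure]
    (hV : finrank ℝ V = 2) {A B C : V} (hABC : AffineIndependent ℝ ![A, B, C]) {f : V → ℝ}
    (hf : Continuous f) {p : ℕ} (hp : ∀ x ∈ segment ℝ A B, HasDegreeLEOnLine f p x C) :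
    ∫ t in (0 : ℝ)..1, f (A + t • (B - A)) ^ 2 ≤
      (p + 1) * (p + 2) / 2 * ⨍ x in convexHull ℝ {A, B, C}, f x ^ 2 ∂μ := by
  have : FiniteDimensional ℝ V := Module.finite_of_finrank_eq_succ hV
  obtain ⟨e, rfl, rfl, rfl⟩ := exists_affineEquiv_of_affineIndependent hABC hV
  have htriangle : e '' cone (Set.Icc 0 1) = convexHull ℝ {e (0, 0), e (1, 0), e (0, 1)} := by
    rw [cone_Icc, ← AffineEquiv.coe_toAffineMap, AffineMap.image_convexHull]
    simp only [Set.image_insert_eq, Set.image_singleton, AffineEquiv.coe_toAffineMap]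
  have hedge (t : ℝ) : e (t, 0) = e (0, 0) + t • (e (1, 0) - e (0, 0)) := by
    have h := e.apply_lineMap (0, 0) (1, 0) t
    rw [AffineMap.lineMap_apply_module' (e (0, 0)), add_comm] at h
    rw [← h]
    simp [AffineMap.lineMap_apply_module]
  have hline : ∀ t ∈ Set.Icc (0 : ℝ) 1, HasDegreeLEOnLine (f ∘ e) p (t, 0) (0, 1) := by
    intro t ht
    refine HasDegreeLEOnLine.comp_affineMap e.toAffineMap (hp _ ?_)
    rw [segment_eq_image']
    exact ⟨t, ht, (hedge t).symm⟩
  have he : Continuous e := e.toAffineMap.continuous_of_finiteDimensional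
  calc ∫ t in (0 : ℝ)..1, f (e (0, 0) + t • (e (1, 0) - e (0, 0))) ^ 2
      = ⨍ t in Set.Icc (0 : ℝ) 1, (f ∘ e) (t, 0) ^ 2 := by
        simp only [setAverage_eq, Real.volume_real_Icc_of_le zero_le_one, sub_zero, inv_one,
          one_smul, integral_Icc_eq_integral_Ioc, intervalIntegral.integral_of_le zero_le_one,
          Function.comp_apply, ← hedge]
    _ ≤ (p + 1) * (p + 1 + finrank ℝ ℝ) / (finrank ℝ ℝ + 1) *
          ⨍ z in cone (Set.Icc (0 : ℝ) 1), (f ∘ e) z ^ 2 :=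
        setAverage_base_sq_le_cone volume isCompact_Icc (hf.comp he) hline
    _ = (p + 1) * (p + 2) / 2 *
          ⨍ x in convexHull ℝ {e (0, 0), e (1, 0), e (0, 1)}, f x ^ 2 ∂μ := by
        rw [← htriangle, setAverage_image_affineEquiv μ volume, finrank_self, Nat.cast_one,
          add_assoc (p : ℝ), one_add_one_eq_two]
        rfl

end Triangle

end TraceInverse

theorem trace_inverse_estimate_triangle_general {V : Type*} [NormedAddCommGroup V]
    [NormedSpace ℝ V] [MeasurableSpace V] [BorelSpace V] (μ : Measure V) [μ.IsAddHaarMeasure]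
    (hV : Module.finrank ℝ V = 2) {A B C : V} (hABC : AffineIndependent ℝ ![A, B, C])
    {f : V → ℝ} (hf : Continuous f) {p : ℕ}
    (hp : ∀ x ∈ segment ℝ A B, TraceInverse.HasDegreeLEOnLine f p x C) :
    dist A B * ∫ t in (0 : ℝ)..1, f (A + t • (B - A)) ^ 2 ≤
      (p + 1) * (p + 2) / 2 * (dist A B / μ.real (convexHull ℝ {A, B, C})) *
        ∫ x in convexHull ℝ {A, B, C}, f x ^ 2 ∂μ :=
  calc dist A B * ∫ t in (0 : ℝ)..1, f (A + t • (B - A)) ^ 2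
      ≤ dist A B * ((p + 1) * (p + 2) / 2 * ⨍ x in convexHull ℝ {A, B, C}, f x ^ 2 ∂μ) := by
        gcongr
        exact TraceInverse.integral_segment_sq_le_setAverage μ hV hABC hf hp
    _ = _ := by
        rw [setAverage_eq, smul_eq_mul]
        ring

/-- Trace inverse estimate on a triangle (`d = 2` case): for a nondegenerate triangle `K` with
vertices `A, B, C` in the Euclidean plane, edge `e` from `A` to `B` of length `|e| = dist A B`,
and area `|K|`, every bivariate polynomial `q` of total degree at most `p` satisfies
`∫_e q² ds ≤ ((p+1)(p+2)/2) (|e|/|K|) ∫_K q² dA`, where the edge integral is expressed via the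
parametrization `t ↦ A + t (B - A)`, `t ∈ [0,1]`, as `|e| ∫_0^1 q(A + t(B-A))² dt`. -/
theorem trace_inverse_estimate_triangle
    (A B C : EuclideanSpace ℝ (Fin 2)) (hABC : AffineIndependent ℝ ![A, B, C])
    (p : ℕ) (q : MvPolynomial (Fin 2) ℝ) (hq : q.totalDegree ≤ p) :
    dist A B * ∫ t in (0 : ℝ)..1,
        (MvPolynomial.eval (fun i => (A + t • (B - A)) i) q) ^ 2 ≤
      (((p : ℝ) + 1) * ((p : ℝ) + 2) / 2) *
        (dist A B /
          (volume (convexHull ℝ ({A, B, C} : Set (EuclideanSpace ℝ (Fin 2))))).toReal) *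
        ∫ x in convexHull ℝ ({A, B, C} : Set (EuclideanSpace ℝ (Fin 2))),
          (MvPolynomial.eval (fun i => x i) q) ^ 2 :=
  trace_inverse_estimate_triangle_general volume finrank_euclideanSpace_fin hABC
    ((MvPolynomial.continuous_eval q).comp (PiLp.continuous_ofLp 2 _)) fun x _ =>
    (TraceInverse.hasDegreeLEOnLine_eval hq x C).comp_affineMap
      (WithLp.linearEquiv 2 ℝ (Fin 2 → ℝ)).toLinearMap.toAffineMap
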